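/- Power-sum Hamiltonians: under these hypotheses, define elements P_k ∈ R by the Newton recursion P_1 := C_1 and, for k ≥ 2, P_k := Σ_{i=1}^{k-1} (−1)^{i-1}·C_i·P_{k-i} + (−1)^{k-1}·k·C_k, with the convention C_j := 0 for j > r+1 (so that exp(−Σ_{k≥1} (z^k/k)·P_k) = Σ_{m=0}^{r+1} (−z)^m·C_m formally). Then P_k·M_n − M_n·P_k = (1−q^k)·M_{n+k} for all k ≥ 1 and n ∈ ℤ, where M_n := M_{1,n}. -/

import Mathlib

/-- ξ_{α,n} := M_{α,n} · M_{α,n+1}⁻¹ -/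
def xiv {R : Type*} [Ring R] (M Mi : ℕ → ℤ → R) (α : ℕ) (n : ℤ) : R :=
  M α n * Mi α (n + 1)

/-- ξ_{α,n}⁻¹ = M_{α,n+1} · M_{α,n}⁻¹ -/
def xivInv {R : Type*} [Ring R] (M Mi : ℕ → ℤ → R) (α : ℕ) (n : ℤ) : R :=
  M α (n + 1) * Mi α n

/-- x_{α,n} := ξ_{α,n}⁻¹ · ξ_{α-1,n} -/
def xv {R : Type*} [Ring R] (M Mi : ℕ → ℤ → R) (α : ℕ) (n : ℤ) : R :=
  xivInv M Mi α n * xiv M Mi (α - 1) n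

/-- The Miura coefficient C_{m,n} = Σ_{r+1 ≥ α₁ > ⋯ > α_m ≥ 1}
∏_{j=1}^m x_{α_j, n+(r+1-α_j)-(j-1)} (ordered product, j increasing left to right). -/
def CMiura {R : Type*} [Ring R] (M Mi : ℕ → ℤ → R) (r : ℕ) (m : ℕ) (n : ℤ) : R :=
  ∑ S ∈ Finset.powersetCard m (Finset.Icc 1 (r + 1)),
    (((S.sort (· ≤ ·)).reverse.zipIdx.map Prod.swap).map
      (fun ji => xv M Mi ji.2 (n + ((r : ℤ) + 1 - (ji.2 : ℤ)) - (ji.1 : ℤ)))).prod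

/-- The power sums P_k defined by the Newton recursion:
P_1 = C_1, P_k = Σ_{i=1}^{k-1} (-1)^{i-1} C_i P_{k-i} + (-1)^{k-1} k C_k. -/
def newtonP {R : Type*} [Ring R] (C : ℕ → R) : ℕ → R
  | 0 => 0
  | k + 1 =>
      (∑ i ∈ (Finset.Icc 1 k).attach,
        (-1 : R) ^ ((i : ℕ) - 1) * C i * newtonP C (k + 1 - (i : ℕ)))
        + (-1 : R) ^ k * ((k + 1 : ℕ) : R) * C (k + 1)
  decreasing_by
    have h := i.2
    simp only [Finset.mem_Icc] at h
    omega

theorem aux_newton {R : Type*} [Ring R] (q : R) (hq : ∀ x : R, q * x = x * q)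
    (c p : ℕ → R) (M : ℤ → R) (c0 : c 0 = 1)
    (hN : ∀ k : ℕ, ∑ ij ∈ Finset.HasAntidiagonal.antidiagonal k, c ij.1 * p ij.2 = -(((k + 1 : ℕ) : R) * c (k + 1)))
    (hc : ∀ (m : ℕ) (n : ℤ), c (m + 1) * M n - M n * c (m + 1)
      = q * (c m * M (n + 1)) - M (n + 1) * c m) (k : ℕ) :
    ∀ n : ℤ, p k * M n - M n * p k = (1 - q ^ (k + 1)) * M (n + ((k + 1 : ℕ) : ℤ)) := by
  have tel : ∀ (m : ℕ) (n : ℤ), M n * c (m + 1) - c (m + 1) * M n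
      = ∑ ij ∈ Finset.HasAntidiagonal.antidiagonal m, (1 - q) * (c ij.1 * M (n + ((ij.2 + 1 : ℕ) : ℤ))) := by
    intro m
    induction m with
    | zero =>
      intro n
      have := hc 0 n
      simp [c0] at this ⊢
      rw [← neg_sub, this]
      noncomm_ring
    | succ m ih =>
      intro n
      have h1 := hc (m + 1) n
      have h2 := ih (n + 1)
      rw [Finset.Nat.sum_antidiagonal_succ']
      have e : ∀ j : ℕ, n + ((j + 1 + 1 : ℕ) : ℤ) = n + 1 + ((j + 1 : ℕ) : ℤ) := by
        intro j; push_cast; ring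
      simp only [e]
      rw [← h2]
      simp only [zero_add, Nat.cast_one]
      rw [sub_eq_iff_eq_add] at h1
      rw [h1]
      noncomm_ring
  induction k using Nat.strong_induction_on with
  | _ k ih =>
  intro n
  have hqp : ∀ (j : ℕ) (x : R), q ^ j * x = x * q ^ j := by
    intro j x
    exact ((show Commute q x from hq x).pow_left j).eq
  rcases k with _ | k
  · have h1 := hN 0
    have h2 := hc 0 n
    simp [c0] at h1 h2 ⊢
    rw [h1, neg_mul, mul_neg, sub_neg_eq_add, neg_add_eq_sub, ← neg_sub, h2]
    noncomm_ring
  · -- key identity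
    have key : ∑ ij ∈ Finset.HasAntidiagonal.antidiagonal (k + 1), c ij.1 * (p ij.2 * M n - M n * p ij.2)
        = ∑ ij ∈ Finset.HasAntidiagonal.antidiagonal (k + 1),
          c ij.1 * ((1 - q ^ (ij.2 + 1)) * M (n + ((ij.2 + 1 : ℕ) : ℤ))) := by
      have s1 : ∑ ij ∈ Finset.HasAntidiagonal.antidiagonal (k + 1), c ij.1 * (p ij.2 * M n - M n * p ij.2)
          = (∑ ij ∈ Finset.HasAntidiagonal.antidiagonal (k + 1), c ij.1 * p ij.2) * M n
            - M n * (∑ ij ∈ Finset.HasAntidiagonal.antidiagonal (k + 1), c ij.1 * p ij.2)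
            - ∑ ij ∈ Finset.HasAntidiagonal.antidiagonal (k + 1), (c ij.1 * M n - M n * c ij.1) * p ij.2 := by
        rw [Finset.sum_mul, Finset.mul_sum, ← Finset.sum_sub_distrib, ← Finset.sum_sub_distrib]
        refine Finset.sum_congr rfl fun ij _ => ?_
        noncomm_ring
      have s2 : ∑ ij ∈ Finset.HasAntidiagonal.antidiagonal (k + 1), (c ij.1 * M n - M n * c ij.1) * p ij.2
          = q * ((∑ ij ∈ Finset.HasAntidiagonal.antidiagonal k, c ij.1 * p ij.2) * M (n + 1))
            - q * (∑ ij ∈ Finset.HasAntidiagonal.antidiagonal k, c ij.1 * ((1 - q ^ (ij.2 + 1)) * M (n + 1 + ((ij.2 + 1 : ℕ) : ℤ))))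
            - M (n + 1) * (∑ ij ∈ Finset.HasAntidiagonal.antidiagonal k, c ij.1 * p ij.2) := by
        rw [Finset.Nat.sum_antidiagonal_succ]
        simp only [c0, one_mul, mul_one, sub_self, zero_mul, zero_add]
        rw [Finset.sum_mul, Finset.mul_sum, Finset.mul_sum, Finset.mul_sum,
          ← Finset.sum_sub_distrib, ← Finset.sum_sub_distrib]
        refine Finset.sum_congr rfl fun ij hij => ?_
        have hj : ij.2 < k + 1 := by
          have := Finset.HasAntidiagonal.mem_antidiagonal.1 hij
          omega
        rw [← ih ij.2 hj (n + 1), hc]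
        noncomm_ring
      have t := tel k (n + 1)
      have h3 := hc (k + 1) n
      have s3 : ∑ ij ∈ Finset.HasAntidiagonal.antidiagonal (k + 1),
          c ij.1 * ((1 - q ^ (ij.2 + 1)) * M (n + ((ij.2 + 1 : ℕ) : ℤ)))
          = c (k + 1) * ((1 - q) * M (n + 1)) + 
          (∑ ij ∈ Finset.HasAntidiagonal.antidiagonal k, (1 - q) * (c ij.1 * M (n + 1 + ((ij.2 + 1 : ℕ) : ℤ)))
          + q * (∑ ij ∈ Finset.HasAntidiagonal.antidiagonal k, c ij.1 * ((1 - q ^ (ij.2 + 1)) * M (n + 1 + ((ij.2 + 1 : ℕ) : ℤ))))) := by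
        rw [Finset.Nat.sum_antidiagonal_succ', Finset.mul_sum, ← Finset.sum_add_distrib]
        have e : ∀ j : ℕ, n + ((j + 1 + 1 : ℕ) : ℤ) = n + 1 + ((j + 1 : ℕ) : ℤ) := by
          intro j; push_cast; ring
        simp only [e, zero_add, pow_one, Nat.cast_one]
        congr 1
        refine Finset.sum_congr rfl fun ij _ => ?_
        rw [pow_succ' q (ij.2 + 1)]
        simp only [sub_mul, mul_sub, one_mul, mul_assoc, hq (c ij.1 * _)]
        rw [hq (q ^ (ij.2 + 1) * _), mul_assoc]
        abel
      rw [s1, s2, s3, hN, hN, ← t]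
      set X := ∑ ij ∈ Finset.HasAntidiagonal.antidiagonal k, c ij.1 * ((1 - q ^ (ij.2 + 1)) * M (n + 1 + ((ij.2 + 1 : ℕ) : ℤ)))
      have e4 : c (k+1) * ((1 - q) * M (n+1)) = c (k+1) * M (n+1) - q * (c (k+1) * M (n+1)) := by
        rw [← mul_assoc q, hq (c (k+1))]; noncomm_ring
      have e5 : M n * (((k + 1 + 1 : ℕ) : R) * c (k + 1 + 1)) = ((k + 1 + 1 : ℕ) : R) * (M n * c (k + 1 + 1)) := by
        rw [← mul_assoc, ← mul_assoc, (Nat.cast_commute _ (M n)).eq]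
      have e6 : M (n+1) * (((k + 1 : ℕ) : R) * c (k + 1)) = ((k + 1 : ℕ) : R) * (M (n+1) * c (k + 1)) := by
        rw [← mul_assoc, ← mul_assoc, (Nat.cast_commute _ (M (n+1))).eq]
      have e7 : q * (((k + 1 : ℕ) : R) * c (k + 1) * M (n+1)) = ((k + 1 : ℕ) : R) * (q * (c (k + 1) * M (n+1))) := by
        rw [← mul_assoc, ← mul_assoc, ← mul_assoc, ← mul_assoc, (Nat.cast_commute _ q).eq]
      rw [neg_mul, neg_mul, mul_neg, mul_neg, mul_neg, e4, e5, e6, e7, mul_assoc]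
      have h4 : c (k+1+1) * M n = M n * c (k+1+1) + q * (c (k+1) * M (n+1)) - M (n+1) * c (k+1) := by
        rw [← sub_eq_zero] at h3 ⊢
        rw [← h3]; abel
      rw [h4]
      push_cast
      noncomm_ring
    rw [Finset.Nat.sum_antidiagonal_succ, Finset.Nat.sum_antidiagonal_succ] at key
    simp only [c0, one_mul] at key
    have tail : ∑ ij ∈ Finset.HasAntidiagonal.antidiagonal k, c (ij.1 + 1) * (p ij.2 * M n - M n * p ij.2)
        = ∑ ij ∈ Finset.HasAntidiagonal.antidiagonal k,
          c (ij.1 + 1) * ((1 - q ^ (ij.2 + 1)) * M (n + ((ij.2 + 1 : ℕ) : ℤ))) := by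
      refine Finset.sum_congr rfl fun ij hij => ?_
      have hj : ij.2 < k + 1 := by
        have := Finset.HasAntidiagonal.mem_antidiagonal.1 hij
        omega
      rw [ih ij.2 hj n]
    rw [tail] at key
    exact add_right_cancel key

theorem aux_newtonP {R : Type*} [Ring R] (C : ℕ → R) (h0 : C 0 = 1) (k : ℕ) :
    ∑ ij ∈ Finset.HasAntidiagonal.antidiagonal k, ((-1 : R) ^ ij.1 * C ij.1) * newtonP C (ij.2 + 1)
      = -(((k + 1 : ℕ) : R) * ((-1 : R) ^ (k + 1) * C (k + 1))) := by
  have h : newtonP C (k + 1) = (∑ i ∈ Finset.Icc 1 k,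
        (-1 : R) ^ (i - 1) * C i * newtonP C (k + 1 - i))
        + (-1 : R) ^ k * ((k + 1 : ℕ) : R) * C (k + 1) := by
    rw [newtonP]
    congr 1
    exact Finset.sum_attach (Finset.Icc 1 k)
      (fun i => (-1 : R) ^ (i - 1) * C i * newtonP C (k + 1 - i))
  rw [Finset.Nat.sum_antidiagonal_eq_sum_range_succ
    (fun i j => ((-1 : R) ^ i * C i) * newtonP C (j + 1)), Finset.sum_range_succ']
  simp only [pow_zero, h0, one_mul, Nat.sub_zero]
  rw [h, Finset.range_eq_Ico, Finset.sum_Ico_add' (fun i => (-1 : R) ^ i * C i * newtonP C (k - i + 1)) 0 k 1]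
  have : Finset.Ico (0 + 1) (k + 1) = Finset.Icc 1 k := by ext; simp
  rw [this, ← add_assoc, ← Finset.sum_add_distrib, Finset.sum_eq_zero, zero_add]
  · rw [pow_succ, ← mul_assoc, ((Nat.cast_commute (k+1) ((-1 : R)^k * -1)).eq)]
    simp
  · intro i hi
    rw [Finset.mem_Icc] at hi
    obtain ⟨j, rfl⟩ : ∃ j, i = j + 1 := ⟨i - 1, by omega⟩
    rw [show k + 1 - (j + 1) = k - (j + 1) + 1 by omega, pow_succ]
    simp

/-- shifted Miura coefficients -/
def auxB {R : Type*} [Ring R] (x : ℕ → ℤ → R) : ℕ → ℤ → ℕ → R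
  | 0, _, m => if m = 1 then 1 else 0
  | _ + 1, _, 0 => 0
  | α + 1, n, m + 1 => auxB x α (n + 1) (m + 1) + x (α + 1) n * auxB x α n m

theorem auxB_zero {R : Type*} [Ring R] (x : ℕ → ℤ → R) (α : ℕ) (n : ℤ) : auxB x α n 0 = 0 := by
  cases α <;> simp [auxB]

theorem auxB_one {R : Type*} [Ring R] (x : ℕ → ℤ → R) (α : ℕ) : ∀ (n : ℤ), auxB x α n 1 = 1 := by
  induction α with
  | zero => intro n; simp [auxB]
  | succ α ih => intro n; rw [auxB, ih, auxB_zero]; simp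

/-- product attached to a list -/
def auxT {R : Type*} [Ring R] (x : ℕ → ℤ → R) (α : ℤ) (n : ℤ) (l : List ℕ) : R :=
  ((l.zipIdx.map Prod.swap).map (fun ji => x ji.2 (n + (α - (ji.2 : ℤ)) - (ji.1 : ℤ)))).prod

theorem auxT_cons {R : Type*} [Ring R] (x : ℕ → ℤ → R) (α : ℕ) (n : ℤ) (l : List ℕ) :
    auxT x ((α + 1 : ℕ) : ℤ) n ((α + 1) :: l) = x (α + 1) n * auxT x α n l := by
  unfold auxT
  rw [List.zipIdx_cons']
  simp only [List.map_cons, List.prod_cons, List.map_map, Prod.swap]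
  congr 1
  · congr 1; push_cast; ring
  · congr 1
    apply List.map_congr_left
    intro a _
    simp only [Function.comp, Prod.swap, Prod.map, id]
    congr 1; push_cast; ring

theorem auxT_shift {R : Type*} [Ring R] (x : ℕ → ℤ → R) (α : ℕ) (n : ℤ) (l : List ℕ) :
    auxT x ((α + 1 : ℕ) : ℤ) n l = auxT x α (n + 1) l := by
  unfold auxT
  congr 1
  apply List.map_congr_left
  intro a _
  congr 1; push_cast; ring

theorem aux_sort (α : ℕ) (S : Finset ℕ) (hS : S ⊆ Finset.Icc 1 α) :
    ((insert (α + 1) S).sort (· ≤ ·)).reverse = (α + 1) :: (S.sort (· ≤ ·)).reverse := by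
  have hlt : ∀ b ∈ S, b < α + 1 := fun b hb => by
    have := Finset.mem_Icc.1 (hS hb); omega
  have hn : α + 1 ∉ S := fun h => lt_irrefl _ (hlt _ h)
  have : (insert (α + 1) S).sort (· ≤ ·) = S.sort (· ≤ ·) ++ [α + 1] := by
    have hnd : (S.sort (· ≤ ·) ++ [α + 1]).Nodup := by
      rw [List.nodup_append]
      refine ⟨Finset.sort_nodup _ _, by simp, ?_⟩
      intro a ha b hb
      simp at ha hb
      have := hlt a ha
      omega
    have e : (S.sort (· ≤ ·) ++ [α + 1]).toFinset = insert (α + 1) S := by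
      ext; simp
    rw [← e, List.toFinset_sort _ hnd, List.pairwise_append]
    refine ⟨Finset.pairwise_sort _ _, by simp, ?_⟩
    intro a ha b hb
    simp at ha hb
    have := hlt a ha
    omega
  rw [this]; simp

theorem aux_sum {R : Type*} [Ring R] (x : ℕ → ℤ → R) (α : ℕ) : ∀ (n : ℤ) (m : ℕ),
    ∑ S ∈ Finset.powersetCard m (Finset.Icc 1 α), auxT x α n (S.sort (· ≤ ·)).reverse
      = auxB x α n (m + 1) := by
  induction α with
  | zero =>
    intro n m
    cases m with
    | zero => simp [auxT, auxB]
    | succ m => rw [Finset.powersetCard_eq_empty.2 (by simp)]; simp [auxB]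
  | succ α ih =>
    intro n m
    cases m with
    | zero => rw [auxB_one]; simp [auxT]
    | succ m =>
      have hn : α + 1 ∉ Finset.Icc 1 α := by simp
      have e : Finset.Icc 1 (α + 1) = insert (α + 1) (Finset.Icc 1 α) := by ext; simp; omega
      rw [e, Finset.powersetCard_succ_insert hn, Finset.sum_union, Finset.sum_image, auxB,
        ← ih, ← ih, Finset.mul_sum]
      · congr 1
        · exact Finset.sum_congr rfl fun S _ => auxT_shift x α n _
        · refine Finset.sum_congr rfl fun S hS => ?_
          rw [aux_sort α S (Finset.mem_powersetCard.1 hS).1, auxT_cons]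
      · intro S hS T hT h
        have h1 : α + 1 ∉ S := fun h => hn ((Finset.mem_powersetCard.1 hS).1 h)
        have h2 : α + 1 ∉ T := fun h => hn ((Finset.mem_powersetCard.1 hT).1 h)
        rw [← Finset.erase_insert h1, ← Finset.erase_insert h2]
        rw [h]
      · rw [Finset.disjoint_left]
        intro S hS hS'
        obtain ⟨T, _, rfl⟩ := Finset.mem_image.1 hS'
        exact hn ((Finset.mem_powersetCard.1 hS).1 (Finset.mem_insert_self _ _))

theorem aux_CMiura {R : Type*} [Ring R] (M Mi : ℕ → ℤ → R) (r m : ℕ) (n : ℤ) :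
    CMiura M Mi r m n = auxB (xv M Mi) (r + 1) n (m + 1) := by
  rw [← aux_sum]
  unfold CMiura auxT
  push_cast
  rfl

/-- time shift -/
theorem auxB_shift {R : Type*} [Ring R] (x u : ℕ → ℤ → R) (N : ℕ)
    (u0 : ∀ n, u 0 n = 0)
    (ha : ∀ α n, α < N → u (α + 1) n = u α (n + 1) + x (α + 1) (n + 1) - x (α + 1) n)
    (hb : ∀ α n, 1 ≤ α → α < N → x (α + 1) (n + 1) * u α n = u α (n + 1) * x α n)
    (α : ℕ) : α ≤ N → ∀ (n : ℤ) (m : ℕ),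
      auxB x α (n + 1) (m + 1) = auxB x α n (m + 1) + u α n * auxB x (α - 1) n m := by
  induction α with
  | zero => intro _ n m; simp [u0, auxB]
  | succ α ih =>
    intro hα n m
    have ih := ih (by omega)
    rw [auxB, auxB, ih (n + 1), ha α n (by omega)]
    simp only [Nat.add_sub_cancel]
    rcases m with _ | m
    · simp [auxB_zero]
    · rw [ih n m]
      rcases α with _ | α
      · by_cases hm : m = 0 <;> simp [u0, auxB, hm]
      · simp only [Nat.add_sub_cancel]
        have hb := hb (α + 1) n (by omega) (by omega)
        have e3 : auxB x (α + 1) n (m + 1) = auxB x α (n + 1) (m + 1) + x (α + 1) n * auxB x α n m := by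
          rw [auxB]
        rw [e3]
        simp only [mul_add, add_mul, sub_mul, ← mul_assoc]
        rw [hb]
        abel

theorem auxB_three {R : Type*} [Ring R] (x u : ℕ → ℤ → R) (N : ℕ)
    (hs : ∀ α, α ≤ N → ∀ (n : ℤ) (m : ℕ),
      auxB x α (n + 1) (m + 1) = auxB x α n (m + 1) + u α n * auxB x (α - 1) n m)
    (a0 a1 q : R) (n : ℤ)
    (h1 : a0 * x 1 n = q * a1) (h1' : x 1 n * a0 = a1) (h1'' : a1 * x 1 n = q * (x 1 n * a1))
    (hq : ∀ y, q * y = y * q)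
    (hx0 : ∀ α, 2 ≤ α → α ≤ N → a0 * x α n = x α n * a0)
    (hx1 : ∀ α, 2 ≤ α → α ≤ N → a1 * x α n = x α n * a1)
    (hu0 : ∀ α, 1 ≤ α → α < N → a0 * u α n = u α n * a0)
    (hu1 : ∀ α, 2 ≤ α → α < N → a1 * u α n = u α n * a1)
    (hu1' : 1 < N → a1 * u 1 n = q * (u 1 n * a1))
    (α : ℕ) : (α + 1 ≤ N → ∀ m : ℕ, auxB x (α + 1) n (m + 1) * a0 + q * (auxB x (α + 1) n m * a1)
      = a0 * auxB x (α + 1) n (m + 1) + a1 * auxB x (α + 1) n m) := by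
  -- shifted sequences
  have rec3 : ∀ β, β < N → ∀ m, auxB x (β + 1) n (m + 1) = auxB x β n (m + 1)
      + (u β n * auxB x (β - 1) n m + x (β + 1) n * auxB x β n m) := by
    intro β hβ m
    rw [auxB, hs β hβ.le, add_assoc]
  -- shift down
  let s : (ℕ → R) → ℕ → R := fun f m => if m = 0 then 0 else f (m - 1)
  have rec3' : ∀ β, β < N → ∀ m, auxB x (β + 1) n m = auxB x β n m
      + (u β n * s (auxB x (β - 1) n) m + x (β + 1) n * s (auxB x β n) m) := by
    intro β hβ m
    rcases m with _ | m
    · simp [auxB_zero, s]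
    · simp [s, rec3 β hβ]
  have ext : ∀ β, (∀ m, auxB x β n (m + 1) * a0 + q * (auxB x β n m * a1)
      = a0 * auxB x β n (m + 1) + a1 * auxB x β n m) →
      ∀ m, auxB x β n m * a0 + q * (s (auxB x β n) m * a1)
      = a0 * auxB x β n m + a1 * s (auxB x β n) m := by
    intro β h m
    rcases m with _ | m
    · simp [auxB_zero, s]
    · simpa [s] using h m
  have hqc : ∀ y z : R, q * (y * z) = y * (q * z) := by
    intro y z; rw [← mul_assoc, hq, mul_assoc]
  have b0 : ∀ m, auxB x 0 n (m + 1) = if m = 0 then 1 else 0 := by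
    intro m; simp [auxB]
  have base : 1 ≤ N → ∀ m, auxB x 1 n (m + 1) * a0 + q * (auxB x 1 n m * a1)
      = a0 * auxB x 1 n (m + 1) + a1 * auxB x 1 n m := by
    intro hN m
    rcases m with _ | _ | _ | m
    · simp [auxB]
    · simp [auxB]
      rw [h1, h1']; abel
    · simp [auxB, h1'']
    · simp [auxB]
  induction α using Nat.strong_induction_on with
  | _ α ih =>
  intro hα m
  rcases α with _ | _ | α
  · exact base hα m
  · have B := base (by omega)
    have A := B m
    have A' := ext 1 B m
    rw [rec3 1 (by omega) m, rec3' 1 (by omega) m]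
    simp only [Nat.sub_self]
    have cx0 := hx0 2 le_rfl hα
    have cx1 := hx1 2 le_rfl hα
    have cu0 := hu0 1 le_rfl (by omega)
    have cu1 := hu1' (by omega)
    have Z : auxB x 0 n m * a0 = a0 * auxB x 0 n m := by
      by_cases h : m = 1 <;> simp [auxB, h]
    have Z' : s (auxB x 0 n) m * a1 = a1 * s (auxB x 0 n) m := by
      by_cases h : m = 0
      · simp [s, h]
      · by_cases h' : m - 1 = 1 <;> simp [s, auxB, h, h']
    calc _ = (auxB x 1 n (m + 1) * a0 + q * (auxB x 1 n m * a1))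
          + x 2 n * (auxB x 1 n m * a0 + q * (s (auxB x 1 n) m * a1))
          + u 1 n * (auxB x 0 n m * a0) + q * (u 1 n * (s (auxB x 0 n) m * a1)) := by
            rw [mul_add (x 2 n), ← hqc (x 2 n)]; noncomm_ring
      _ = _ := by
        rw [A, A', Z, Z']
        simp only [mul_add, ← mul_assoc]
        rw [cx0, cx1, cu0, cu1]
        simp only [mul_assoc]
        abel
  · have A := ih (α + 1) (by omega) (by omega)
    have B := ih α (by omega) (by omega)
    have A1 := A m
    have A2 := ext _ A m
    have B2 := ext _ B m
    have B1 := ext _ B m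
    rw [rec3 (α + 1 + 1) (by omega) m, rec3' (α + 1 + 1) (by omega) m]
    simp only [Nat.add_sub_cancel]
    have cx0 := hx0 (α + 1 + 1 + 1) (by omega) hα
    have cx1 := hx1 (α + 1 + 1 + 1) (by omega) hα
    have cu0 := hu0 (α + 1 + 1) (by omega) (by omega)
    have cu1 := hu1 (α + 1 + 1) (by omega) (by omega)
    generalize x (α + 1 + 1 + 1) n = X at *
    generalize u (α + 1 + 1) n = U at *
    calc _ = (auxB x (α + 1 + 1) n (m + 1) * a0 + q * (auxB x (α + 1 + 1) n m * a1))
          + X * (auxB x (α + 1 + 1) n m * a0 + q * (s (auxB x (α + 1 + 1) n) m * a1))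
          + U * (auxB x (α + 1) n m * a0 + q * (s (auxB x (α + 1) n) m * a1)) := by
            rw [mul_add X, mul_add U, ← hqc X, ← hqc U]; noncomm_ring
      _ = _ := by
        rw [A1, A2, B2]
        simp only [mul_add, ← mul_assoc]
        rw [cx0, cx1, cu0, cu1]
        simp only [mul_assoc]
        abel

theorem aux_inv {R : Type*} [Ring R] (t m mi y : R) (ht : ∀ z, t * z = z * t)
    (h1 : m * mi = 1) (h2 : mi * m = 1) (h : m * y = t * y * m) : y * mi = t * mi * y := by
  calc y * mi = mi * (m * y) * mi := by rw [← mul_assoc, h2, one_mul]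
    _ = mi * t * y * (m * mi) := by rw [h]; noncomm_ring
    _ = t * mi * y := by rw [h1, mul_one, ht]

theorem aux_U1 {R : Type*} [Ring R] (a0 a1 a2 a0i a1i d0 d1 d1i b1 t s : R)
    (ht : ∀ z, t * z = z * t) (hs : ∀ z, s * z = z * s)
    (h0 : a0 * a0i = 1) (h0' : a0i * a0 = 1) (h1 : a1 * a1i = 1) (h1' : a1i * a1 = 1)
    (hd : d1 * d1i = 1)
    (hsys : t * a2 * a0 = a1 ^ 2 - b1 * d1)
    (h01 : a0 * a1 = t * a1 * a0) (hdd : d0 * d1 = s * d1 * d0)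
    (had0 : a0 * d1 = s * d1 * a0) (had1 : a1 * d1 = d1 * a1) :
    (a2 * a1i - a1 * a0i) * (d0 * d1i) = -(b1 * a1i * a0i * d0) := by
  have E1 : (a2 * a1i - a1 * a0i) * (a0 * a1) = -(b1 * d1) := by
    calc (a2 * a1i - a1 * a0i) * (a0 * a1)
        = a2 * a1i * (a0 * a1) - a1 * (a0i * a0) * a1 := by noncomm_ring
      _ = a2 * ((a1i * t) * a1 * a0) - a1 * a1 := by rw [h01, h0']; noncomm_ring
      _ = t * a2 * a0 - a1 ^ 2 := by
          rw [← ht a1i, mul_assoc t, h1', mul_one, ← mul_assoc, ← ht a2, sq]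
      _ = -(b1 * d1) := by rw [hsys]; abel
  have E : a2 * a1i - a1 * a0i = -(b1 * d1) * (a1i * a0i) := by
    rw [← E1]
    calc _ = (a2 * a1i - a1 * a0i) * (a0 * (a1 * a1i) * a0i) := by rw [h1, mul_one, h0, mul_one]
      _ = _ := by noncomm_ring
  have e1 : d1 * a1i = a1i * d1 := by
    have := aux_inv 1 a1 a1i d1 (by simp) h1 h1' (by simpa using had1)
    simpa using this
  have e2 : d1 * a0i = s * a0i * d1 := aux_inv s a0 a0i d1 hs h0 h0' had0
  rw [E]
  calc -(b1 * d1) * (a1i * a0i) * (d0 * d1i) = -(b1 * (d1 * a1i) * a0i * d0 * d1i) := by noncomm_ring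
    _ = -(b1 * a1i * (d1 * a0i) * d0 * d1i) := by rw [e1]; noncomm_ring
    _ = -(b1 * a1i * (a0i * s) * d1 * d0 * d1i) := by rw [e2, hs a0i]; noncomm_ring
    _ = -(b1 * a1i * a0i * (s * d1 * d0) * d1i) := by noncomm_ring
    _ = -(b1 * a1i * a0i * d0 * (d1 * d1i)) := by rw [← hdd]; noncomm_ring
    _ = _ := by rw [hd, mul_one]

theorem aux_U2 {R : Type*} [Ring R] (am a0 a1 a0i a1i d0 b0 b0i b1 t ti : R)
    (ht : ∀ z, t * z = z * t) (hti : ti * t = 1)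
    (h0 : a0 * a0i = 1) (h0' : a0i * a0 = 1) (h1 : a1 * a1i = 1) (h1' : a1i * a1 = 1)
    (hb : b0i * b0 = 1)
    (hsys : t * a1 * am = a0 ^ 2 - b0 * d0)
    (h01 : a0 * a1 = t * a1 * a0) (hba : b0 * a1 = t * a1 * b0)
    (had : a0 * d0 = d0 * a0) :
    b1 * b0i * (am * a0i - a0 * a1i) = -(b1 * a1i * a0i * d0) := by
  have e1 : d0 * a0i = a0i * d0 := by
    have := aux_inv 1 a0 a0i d0 (by simp) h0 h0' (by simpa using had)
    simpa using this
  have E1 : t * a1 * (am * a0i - a0 * a1i) = t * a1 * (-(b0 * a1i * a0i * d0)) := by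
    calc t * a1 * (am * a0i - a0 * a1i) = t * a1 * am * a0i - t * a1 * a0 * a1i := by noncomm_ring
      _ = a0 * (a0 * a0i) - b0 * (d0 * a0i) - a0 * (a1 * a1i) := by
          rw [hsys, ← h01]; noncomm_ring
      _ = -(b0 * (a1 * a1i) * a0i * d0) := by rw [h0, h1, e1]; noncomm_ring
      _ = -((b0 * a1) * a1i * a0i * d0) := by noncomm_ring
      _ = _ := by rw [hba]; noncomm_ring
  have E : am * a0i - a0 * a1i = -(b0 * a1i * a0i * d0) := by
    have L : ∀ z, a1i * ti * (t * a1 * z) = z := by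
      intro z
      calc _ = a1i * (ti * t) * a1 * z := by noncomm_ring
        _ = z := by rw [hti, mul_one, h1', one_mul]
    rw [← L (am * a0i - a0 * a1i), E1, L]
  rw [E]
  calc _ = -(b1 * (b0i * b0) * a1i * a0i * d0) := by noncomm_ring
    _ = _ := by rw [hb, mul_one]

theorem aux_qc_mul {R : Type*} [Ring R] (q : Rˣ) (hq : ∀ (k : ℤ) (x : R), ((q ^ k : Rˣ) : R) * x = x * ((q ^ k : Rˣ) : R))
    (a y z : R) (k l : ℤ) (h1 : a * y = ((q ^ k : Rˣ) : R) * (y * a))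
    (h2 : a * z = ((q ^ l : Rˣ) : R) * (z * a)) :
    a * (y * z) = ((q ^ (k + l) : Rˣ) : R) * (y * z * a) := by
  rw [← mul_assoc, h1, zpow_add, Units.val_mul, mul_assoc, mul_assoc, h2, ← mul_assoc y, ← hq l y]
  simp only [mul_assoc]

theorem aux_qc_inv {R : Type*} [Ring R] (q : Rˣ) (hq : ∀ (k : ℤ) (x : R), ((q ^ k : Rˣ) : R) * x = x * ((q ^ k : Rˣ) : R))
    (a m mi : R) (k : ℤ) (hm : m * mi = 1) (hm' : mi * m = 1)
    (h1 : a * m = ((q ^ k : Rˣ) : R) * (m * a)) :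
    a * mi = ((q ^ (-k) : Rˣ) : R) * (mi * a) := by
  have e : mi * (a * m) * mi = ((q ^ k : Rˣ) : R) * (a * mi) := by
    rw [h1, ← mul_assoc, ← hq k mi]
    calc _ = ((q ^ k : Rˣ) : R) * ((mi * m) * a * mi) := by noncomm_ring
      _ = _ := by rw [hm', one_mul]
  have e' : mi * (a * m) * mi = mi * a := by
    rw [mul_assoc, mul_assoc, hm, mul_one]
  rw [← e', e, ← mul_assoc, ← Units.val_mul, ← zpow_add]
  simp
theorem quantum_Q_power_sum_Hamiltonians
    {R : Type*} [Ring R] (q A Δ : Rˣ)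
    (hq : ∀ x : R, (q : R) * x = x * (q : R))
    (r : ℕ) (hr : 1 ≤ r)
    (M Mi : ℕ → ℤ → R)
    (hM0 : ∀ n : ℤ, M 0 n = 1)
    (hMtop : ∀ n : ℤ, M (r + 2) n = 0)
    (hMiL : ∀ (α : ℕ) (n : ℤ), α ≤ r + 1 → M α n * Mi α n = 1)
    (hMiR : ∀ (α : ℕ) (n : ℤ), α ≤ r + 1 → Mi α n * M α n = 1)
    (hMsys : ∀ (α : ℕ) (n : ℤ), 1 ≤ α → α ≤ r + 1 →
      (q : R) ^ α * M α (n + 1) * M α (n - 1) = M α n ^ 2 - M (α + 1) n * M (α - 1) n)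
    (hcom : ∀ (α β ε : ℕ) (n : ℤ), ε ≤ 1 → α ≤ r + 1 → β ≤ r + 1 →
      M α n * M β (n + (ε : ℤ)) = (q : R) ^ (ε * min α β) * M β (n + (ε : ℤ)) * M α n)
    (hAΔ : ∀ n : ℤ, M (r + 1) n = ((A ^ n : Rˣ) : R) * (Δ : R))
    (hΔM : ∀ (α : ℕ) (n : ℤ), 1 ≤ α → α ≤ r + 1 →
      (Δ : R) * M α n = ((q ^ ((α : ℤ) * n) : Rˣ) : R) * M α n * (Δ : R))
    (hAM : ∀ (α : ℕ) (n : ℤ), 1 ≤ α → α ≤ r + 1 →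
      (A : R) * M α n = ((q ^ (-(α : ℤ)) : Rˣ) : R) * M α n * (A : R))
    (hΔA : (Δ : R) * (A : R) = (q : R) ^ (r + 1) * (A : R) * (Δ : R))
    (hext : ∀ (α β : ℕ) (n p : ℤ), α ≤ r + 1 → β ≤ r + 1 →
      |p| ≤ |(β : ℤ) - (α : ℤ)| + 1 →
      M α n * M β (n + p) = ((q ^ (p * ((min α β : ℕ) : ℤ)) : Rˣ) : R) * M β (n + p) * M α n) :
    ∀ (k : ℕ) (n : ℤ), 1 ≤ k →
      newtonP (fun j => if j ≤ r + 1 then CMiura M Mi r j 0 else 0) k * M 1 n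
        - M 1 n * newtonP (fun j => if j ≤ r + 1 then CMiura M Mi r j 0 else 0) k
        = (1 - (q : R) ^ k) * M 1 (n + (k : ℤ)) := by

  have hqk : ∀ (k : ℤ) (x : R), ((q ^ k : Rˣ) : R) * x = x * ((q ^ k : Rˣ) : R) := by
    intro k x
    exact (Commute.units_zpow_left (show Commute (q : R) x from hq x) k).eq
  have hqn : ∀ (k : ℕ) (x : R), (q : R) ^ k * x = x * (q : R) ^ k := by
    intro k x
    exact ((show Commute (q : R) x from hq x).pow_left k).eq
  have hMi0 : ∀ n, Mi 0 n = 1 := by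
    intro n
    have := hMiL 0 n (by omega)
    rwa [hM0, one_mul] at this
  have c0 : ∀ α β n, α ≤ r + 1 → β ≤ r + 1 → M α n * M β n = M β n * M α n := by
    intro α β n h1 h2
    simpa using hcom α β 0 n (by omega) h1 h2
  have c1 : ∀ α β n, α ≤ r + 1 → β ≤ r + 1 → M α n * M β (n + 1) = (q : R) ^ (min α β) * M β (n + 1) * M α n := by
    intro α β n h1 h2
    simpa using hcom α β 1 n (by omega) h1 h2
  let x := xv M Mi
  let u : ℕ → ℤ → R := fun α n => if α = 0 then 0 else
    -(M (α + 1) (n + 1) * Mi α (n + 1) * Mi α n * M (α - 1) n)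
  have U1 : ∀ α n, 1 ≤ α → α ≤ r + 1 →
      (xivInv M Mi α (n + 1) - xivInv M Mi α n) * xiv M Mi (α - 1) n = u α n := by
    intro α n h1 h2
    have hu : u α n = -(M (α + 1) (n + 1) * Mi α (n + 1) * Mi α n * M (α - 1) n) := by
      simp only [u]; rw [if_neg (by omega)]
    rw [hu]
    unfold xivInv xiv
    refine aux_U1 _ _ _ _ _ _ (M (α - 1) (n + 1)) _ _ ((q : R) ^ α) ((q : R) ^ (α - 1)) (hqn _) (hqn _)
      (hMiL _ _ h2) (hMiR _ _ h2) (hMiL _ _ h2) (hMiR _ _ h2) (hMiL _ _ (by omega)) ?_ ?_ ?_ ?_ ?_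
    · have := hMsys α (n + 1) h1 h2
      rwa [add_sub_cancel_right] at this
    · simpa using c1 α α n h2 h2
    · simpa using c1 (α - 1) (α - 1) n (by omega) (by omega)
    · have := c1 α (α - 1) n (by omega) (by omega)
      rwa [min_eq_right (by omega)] at this
    · exact c0 _ _ _ (by omega) (by omega)
  have U2 : ∀ α n, 1 ≤ α → α ≤ r →
      xivInv M Mi (α + 1) (n + 1) * (xiv M Mi α n - xiv M Mi α (n + 1)) = u α (n + 1) := by
    intro α n h1 h2
    have hu : u α (n + 1) = -(M (α + 1) (n + 1 + 1) * Mi α (n + 1 + 1) * Mi α (n + 1) * M (α - 1) (n + 1)) := by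
      simp only [u]; rw [if_neg (by omega)]
    rw [hu]
    unfold xivInv xiv
    refine aux_U2 _ _ (M α (n + 1 + 1)) _ _ _ (M (α + 1) (n + 1)) _ _ ((q : R) ^ α) (((q ^ α)⁻¹ : Rˣ) : R) (hqn _) ?_
      (hMiL _ _ (by omega)) (hMiR _ _ (by omega)) (hMiL _ _ (by omega)) (hMiR _ _ (by omega)) (hMiR _ _ (by omega)) ?_ ?_ ?_ ?_
    · rw [← Units.val_pow_eq_pow_val, ← Units.val_mul, inv_mul_cancel, Units.val_one]
    · have := hMsys α (n + 1) h1 (by omega)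
      rwa [add_sub_cancel_right] at this
    · simpa using c1 α α (n + 1) (by omega) (by omega)
    · have := c1 (α + 1) α (n + 1) (by omega) (by omega)
      rwa [min_eq_right (by omega)] at this
    · exact c0 _ _ _ (by omega) (by omega)
  have hxi : ∀ α n, α ≤ r + 1 → xiv M Mi α n * xivInv M Mi α n = 1 := by
    intro α n h
    unfold xiv xivInv
    calc _ = M α n * (Mi α (n + 1) * M α (n + 1)) * Mi α n := by noncomm_ring
      _ = 1 := by rw [hMiR _ _ h, mul_one, hMiL _ _ h]
  have u0 : ∀ n, u 0 n = 0 := by intro n; simp [u]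
  have uN : ∀ n, u (r + 1) n = 0 := by
    intro n; simp only [u]; rw [hMtop]; simp
  have ha : ∀ α n, α < r + 1 → u (α + 1) n = u α (n + 1) + x (α + 1) (n + 1) - x (α + 1) n := by
    intro α n h
    rw [← U1 (α + 1) n (by omega) (by omega)]
    simp only [x, xv, Nat.add_sub_cancel]
    rcases α with _ | α
    · rw [u0]
      simp only [xiv, hM0, hMi0]
      noncomm_ring
    · rw [← U2 (α + 1) n (by omega) (by omega)]
      noncomm_ring
  have hb : ∀ α n, 1 ≤ α → α < r + 1 → x (α + 1) (n + 1) * u α n = u α (n + 1) * x α n := by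
    intro α n h1 h2
    rw [← U1 α n h1 (by omega), ← U2 α n h1 (by omega)]
    simp only [x, xv, Nat.add_sub_cancel]
    have e1 := hxi α (n + 1) (by omega)
    have e2 := hxi α n (by omega)
    calc _ = xivInv M Mi (α + 1) (n + 1) * (xiv M Mi α (n + 1) * xivInv M Mi α (n + 1)
            - xiv M Mi α (n + 1) * xivInv M Mi α n) * xiv M Mi (α - 1) n := by noncomm_ring
      _ = xivInv M Mi (α + 1) (n + 1) * (xiv M Mi α n * xivInv M Mi α n
            - xiv M Mi α (n + 1) * xivInv M Mi α n) * xiv M Mi (α - 1) n := by rw [e1, e2]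
      _ = _ := by noncomm_ring
  have hs := auxB_shift x u (r + 1) u0 ha hb
  have cons1 : ∀ n m, auxB x (r + 1) (n + 1) m = auxB x (r + 1) n m := by
    intro n m
    rcases m with _ | m
    · simp [auxB_zero]
    · rw [hs (r + 1) le_rfl, uN]; simp
  have cons : ∀ n m, auxB x (r + 1) n m = auxB x (r + 1) 0 m := by
    intro n m
    induction n using Int.induction_on with
    | zero => rfl
    | succ i ih => rw [cons1, ih]
    | pred i ih => rw [← ih, ← cons1 (-(i : ℤ) - 1), sub_add_cancel]
  have qc : ∀ β n p, 1 ≤ β → β ≤ r + 1 → |p| ≤ 1 →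
      M 1 n * M β (n + p) = ((q ^ p : Rˣ) : R) * (M β (n + p) * M 1 n) := by
    intro β n p h1 h2 h3
    have := hext 1 β n p (by omega) h2 (by have := abs_nonneg ((β : ℤ) - ((1 : ℕ) : ℤ)); omega)
    rw [min_eq_left h1] at this
    simpa [mul_assoc] using this
  have F0 : ∀ β n, 1 ≤ β → β ≤ r + 1 → M 1 n * M β n = ((q ^ (0 : ℤ) : Rˣ) : R) * (M β n * M 1 n) := by
    intro β n h1 h2
    simpa using qc β n 0 h1 h2 (by simp)
  have F1 : ∀ β n, 1 ≤ β → β ≤ r + 1 → M 1 n * M β (n + 1) = ((q ^ (1 : ℤ) : Rˣ) : R) * (M β (n + 1) * M 1 n) := by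
    intro β n h1 h2
    exact qc β n 1 h1 h2 (by simp)
  have G0 : ∀ β n, 1 ≤ β → β ≤ r + 1 → M 1 (n + 1) * M β n = ((q ^ (-1 : ℤ) : Rˣ) : R) * (M β n * M 1 (n + 1)) := by
    intro β n h1 h2
    have := qc β (n + 1) (-1) h1 h2 (by simp)
    rwa [add_neg_cancel_right] at this
  have star : ∀ (n : ℤ) (m : ℕ), auxB x (r + 1) n (m + 1) * M 1 n + q * (auxB x (r + 1) n m * M 1 (n + 1))
      = M 1 n * auxB x (r + 1) n (m + 1) + M 1 (n + 1) * auxB x (r + 1) n m := by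
    intro n
    have hx1 : x 1 n = M 1 (n + 1) * Mi 1 n := by
      simp [x, xv, xiv, xivInv, hM0, hMi0]
    have L := hMiL 1 n (by omega)
    have L' := hMiR 1 n (by omega)
    have k1 := F1 1 n le_rfl (by omega)
    have k1' : M 1 n * M 1 (n + 1) = q * (M 1 (n + 1) * M 1 n) := by simpa using k1
    have mx : ∀ (a : R) (α : ℕ) (e0 e1 : ℤ), 2 ≤ α → α ≤ r + 1 →
        (∀ β, 1 ≤ β → β ≤ r + 1 → a * M β n = ((q ^ e0 : Rˣ) : R) * (M β n * a)) →
        (∀ β, 1 ≤ β → β ≤ r + 1 → a * M β (n + 1) = ((q ^ e1 : Rˣ) : R) * (M β (n + 1) * a)) →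
        a * x α n = x α n * a := by
      intro a α e0 e1 h1 h2 A0 A1
      have B1 := A1 α (by omega) h2
      have B2 := aux_qc_inv q hqk a _ _ _ (hMiL α n h2) (hMiR α n h2) (A0 α (by omega) h2)
      have B3 := A0 (α - 1) (by omega) (by omega)
      have B4 := aux_qc_inv q hqk a _ _ _ (hMiL (α - 1) (n + 1) (by omega)) (hMiR (α - 1) (n + 1) (by omega))
        (A1 (α - 1) (by omega) (by omega))
      have := aux_qc_mul q hqk a _ _ _ _ (aux_qc_mul q hqk a _ _ _ _ B1 B2)
        (aux_qc_mul q hqk a _ _ _ _ B3 B4)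
      rw [show e1 + -e0 + (e0 + -e1) = 0 by ring] at this
      simpa [x, xv, xiv, xivInv] using this
    have mu : ∀ (a : R) (α : ℕ) (e0 e1 : ℤ), 1 ≤ α → α < r + 1 →
        (∀ β, 1 ≤ β → β ≤ r + 1 → a * M β n = ((q ^ e0 : Rˣ) : R) * (M β n * a)) →
        (∀ β, 1 ≤ β → β ≤ r + 1 → a * M β (n + 1) = ((q ^ e1 : Rˣ) : R) * (M β (n + 1) * a)) →
        a * u α n = ((q ^ (if α = 1 then -e0 else 0) : Rˣ) : R) * (u α n * a) := by
      intro a α e0 e1 h1 h2 A0 A1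
      have B1 := A1 (α + 1) (by omega) (by omega)
      have B2 := aux_qc_inv q hqk a _ _ _ (hMiL α (n + 1) h2.le) (hMiR α (n + 1) h2.le) (A1 α (by omega) h2.le)
      have B3 := aux_qc_inv q hqk a _ _ _ (hMiL α n h2.le) (hMiR α n h2.le) (A0 α (by omega) h2.le)
      have B4 : a * M (α - 1) n = ((q ^ (if α = 1 then 0 else e0) : Rˣ) : R) * (M (α - 1) n * a) := by
        by_cases h : α = 1
        · subst h; simp [hM0]
        · rw [if_neg h]; exact A0 (α - 1) (by omega) (by omega)
      have := aux_qc_mul q hqk a _ _ _ _ (aux_qc_mul q hqk a _ _ _ _ (aux_qc_mul q hqk a _ _ _ _ B1 B2) B3) B4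
      have e : e1 + -e1 + -e0 + (if α = 1 then 0 else e0) = if α = 1 then -e0 else 0 := by
        split_ifs <;> ring
      rw [e] at this
      simp only [u]
      rw [if_neg (by omega), mul_neg, neg_mul, mul_neg, this]
    have A0 : ∀ β, 1 ≤ β → β ≤ r + 1 → M 1 n * M β n = ((q ^ (0 : ℤ) : Rˣ) : R) * (M β n * M 1 n) :=
      fun β h1 h2 => F0 β n h1 h2
    have A1 := fun β h1 h2 => F1 β n h1 h2
    have D0 := fun β h1 h2 => G0 β n h1 h2
    have D1 := fun β h1 h2 => F0 β (n + 1) h1 h2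
    refine auxB_three x u (r + 1) hs (M 1 n) (M 1 (n + 1)) q n ?_ ?_ ?_ hq ?_ ?_ ?_ ?_ ?_ r le_rfl
    · rw [hx1, ← mul_assoc, k1', mul_assoc, mul_assoc, L, mul_one]
    · rw [hx1, mul_assoc, L', mul_one]
    · have B := aux_qc_inv q hqk _ _ _ _ L L' (D0 1 le_rfl (by omega))
      rw [hx1, mul_assoc, B]
      simp only [neg_neg, zpow_one]
      rw [← mul_assoc, ← hq, mul_assoc]
    · exact fun α h1 h2 => mx _ α _ _ h1 h2 A0 A1
    · exact fun α h1 h2 => mx _ α _ _ h1 h2 D0 D1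
    · intro α h1 h2
      simpa using mu _ α _ _ h1 h2 A0 A1
    · intro α h1 h2
      have := mu _ α _ _ (by omega) h2 D0 D1
      rw [if_neg (by omega)] at this
      simpa using this
    · intro h
      simpa using mu _ 1 _ _ le_rfl h D0 D1
  set C : ℕ → R := fun j => if j ≤ r + 1 then CMiura M Mi r j 0 else 0 with hC
  have hCB : ∀ j, C j = auxB x (r + 1) 0 (j + 1) := by
    intro j
    rw [← aux_CMiura]
    simp only [hC]
    split_ifs with h
    · rfl
    · unfold CMiura
      rw [Finset.powersetCard_eq_empty.2 (by simp; omega)]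
      simp
  have C0 : C 0 = 1 := by rw [hCB, auxB_one]
  intro k n hk
  obtain ⟨k, rfl⟩ : ∃ j, k = j + 1 := ⟨k - 1, by omega⟩
  refine aux_newton (q : R) hq (fun i => (-1 : R) ^ i * C i) (fun i => newtonP C (i + 1)) (M 1)
    (by simp [C0]) (fun k => aux_newtonP C C0 k) ?_ k n
  intro m n
  have h := star n (m + 1)
  rw [cons n, cons n, ← hCB, ← hCB] at h
  have h' : C (m + 1) * M 1 n - M 1 n * C (m + 1) = M 1 (n + 1) * C m - q * (C m * M 1 (n + 1)) := by
    rw [sub_eq_sub_iff_add_eq_add, h, add_comm]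
  have hneg : ∀ y : R, y * (-1) ^ m = (-1) ^ m * y := fun y =>
    ((Commute.neg_one_left y).pow_left m).eq.symm
  calc (-1 : R) ^ (m + 1) * C (m + 1) * M 1 n - M 1 n * ((-1) ^ (m + 1) * C (m + 1))
      = -((-1) ^ m * (C (m + 1) * M 1 n)) + (M 1 n * (-1) ^ m) * C (m + 1) := by
        rw [pow_succ]; noncomm_ring
    _ = -((-1) ^ m * (C (m + 1) * M 1 n - M 1 n * C (m + 1))) := by rw [hneg]; noncomm_ring
    _ = ((-1) ^ m * q) * (C m * M 1 (n + 1)) - ((-1) ^ m * M 1 (n + 1)) * C m := by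
        rw [h']; noncomm_ring
    _ = _ := by rw [← hneg, ← hneg]; noncomm_ring
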